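/- The Gaussian isoperimetric profile satisfies I(a) ~ a·√(2·log(1/a)) as a → 0⁺; that is, lim_{a→0⁺} I(a) / (a·√(2·log(1/a))) = 1. -/

import Mathlib

open Real MeasureTheory Filter

/-- The standard Gaussian density. -/
noncomputable def gaussPdf (z : ℝ) : ℝ := (Real.sqrt (2 * Real.pi))⁻¹ * Real.exp (-z ^ 2 / 2)

/-- The standard normal CDF. -/
noncomputable def Phi (r : ℝ) : ℝ := ∫ z in Set.Iic r, gaussPdf z

/-- The inverse of the standard normal CDF. -/
noncomputable def PhiInv : ℝ → ℝ := Function.invFun Phi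

/-- The Gaussian isoperimetric profile `I = φ ∘ Φ⁻¹`. -/
noncomputable def gaussI (a : ℝ) : ℝ := gaussPdf (PhiInv a)

/-!
Put `x = Φ⁻¹(a)`, which tends to `-∞` as `a → 0⁺`. By L'Hôpital's rule `Φ(x) ~ φ(x) / (-x)`
(Mills' ratio), so taking logarithms gives `2 log (1 / Φ(x)) ~ x²`: the factor `-x` only contributes
`log (-x) = o(x²)`. Hence `√(2 log (1 / Φ(x))) ~ -x`, and multiplying the two equivalences gives
`φ(x) ~ Φ(x) √(2 log (1 / Φ(x)))`, which is the claim read at `Φ(x) = a`.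
-/

open Asymptotics Set Topology

theorem hasDerivAt_integral_Iic {E : Type*} [NormedAddCommGroup E] [NormedSpace ℝ E]
    [CompleteSpace E] {f : ℝ → E} (hf : Integrable f) {x : ℝ} (hx : ContinuousAt f x) :
    HasDerivAt (fun b ↦ ∫ z in Iic b, f z) (f x) x := by
  have hsplit : (fun b ↦ ∫ z in Iic b, f z) =
      fun b ↦ (∫ z in Iic x, f z) + ∫ z in x..b, f z := by
    funext b
    rw [← intervalIntegral.integral_Iic_sub_Iic hf.integrableOn hf.integrableOn, add_sub_cancel]
  rw [hsplit]
  exact (intervalIntegral.integral_hasDerivAt_right IntervalIntegrable.refl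
    hf.aestronglyMeasurable.stronglyMeasurableAtFilter hx).const_add _

theorem lt_of_strictMono_of_tendsto_atBot {α β : Type*} [PartialOrder α] [IsCodirectedOrder α]
    [NoMinOrder α] [TopologicalSpace β] [Preorder β] [OrderClosedTopology β] {F : α → β} {c : β}
    (hF : StrictMono F) (hlim : Tendsto F atBot (𝓝 c)) (x : α) : c < F x := by
  obtain ⟨y, hyx⟩ := exists_lt x
  exact (hF.monotone.le_of_tendsto hlim y).trans_lt (hF hyx)

section InvFun

variable {α β : Type*} [LinearOrder α] [Nonempty α] [TopologicalSpace α] [PreconnectedSpace α]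
  [LinearOrder β] [TopologicalSpace β] [OrderTopology β] {F : α → β} {c : β}

theorem apply_invFun_of_mem_Ioo (hF : Continuous F) (hlim : Tendsto F atBot (𝓝 c)) {a : β} {x : α}
    (ha : a ∈ Ioo c (F x)) : F (Function.invFun F a) = a := by
  obtain ⟨y, hy⟩ := (hlim.eventually_lt_const ha.1).exists
  exact Function.invFun_eq (mem_range_of_exists_le_of_exists_ge hF ⟨y, hy.le⟩ ⟨x, ha.2.le⟩)

theorem eventually_apply_invFun_eq [NoMinOrder α] (hmono : StrictMono F) (hF : Continuous F)
    (hlim : Tendsto F atBot (𝓝 c)) : ∀ᶠ a in 𝓝[>] c, F (Function.invFun F a) = a := by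
  obtain ⟨x⟩ := ‹Nonempty α›
  filter_upwards [Ioo_mem_nhdsGT (lt_of_strictMono_of_tendsto_atBot hmono hlim x)] with a ha
  exact apply_invFun_of_mem_Ioo hF hlim ha

theorem tendsto_invFun_atBot [NoMinOrder α] (hmono : StrictMono F) (hF : Continuous F)
    (hlim : Tendsto F atBot (𝓝 c)) : Tendsto (Function.invFun F) (𝓝[>] c) atBot := by
  refine tendsto_atBot.2 fun x ↦ ?_
  filter_upwards [Ioo_mem_nhdsGT (lt_of_strictMono_of_tendsto_atBot hmono hlim x),
    eventually_apply_invFun_eq hmono hF hlim] with a ha hinv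
  exact hmono.le_iff_le.1 (hinv.trans_le ha.2.le)

end InvFun

theorem tendsto_pow_atBot_of_even {R : Type*} [Ring R] [LinearOrder R] [IsStrictOrderedRing R]
    {n : ℕ} (hn : Even n) (hn0 : n ≠ 0) : Tendsto (fun x : R ↦ x ^ n) atBot atTop :=
  ((tendsto_pow_atTop hn0).comp tendsto_neg_atBot_atTop).congr hn.neg_pow

theorem isEquivalent_sqrt {α : Type*} {l : Filter α} {f g : α → ℝ} (h : f ~[l] g) :
    (fun x ↦ √(f x)) ~[l] fun x ↦ √(g x) := by
  obtain ⟨u, hu, hfug⟩ := h.exists_eq_mul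
  refine isEquivalent_iff_exists_eq_mul.2 ⟨fun x ↦ √(u x), by simpa using hu.sqrt, ?_⟩
  filter_upwards [hfug, hu.eventually_const_le zero_lt_one] with x hfx hux
  simp only [hfx, Pi.mul_apply, Real.sqrt_mul hux]

theorem isEquivalent_atBot_of_hasDerivAt {f f' g g' : ℝ → ℝ}
    (hff' : ∀ᶠ x in atBot, HasDerivAt f (f' x) x) (hgg' : ∀ᶠ x in atBot, HasDerivAt g (g' x) x)
    (hg' : ∀ᶠ x in atBot, g' x ≠ 0) (hf : Tendsto f atBot (𝓝 0)) (hg : Tendsto g atBot (𝓝 0))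
    (h : f' ~[atBot] g') : f ~[atBot] g :=
  isEquivalent_of_tendsto_one <|
    HasDerivAt.lhopital_zero_atBot hff' hgg' hg' hf hg ((isEquivalent_iff_tendsto_one hg').1 h)

theorem gaussPdf_eq_gaussianPDFReal : gaussPdf = ProbabilityTheory.gaussianPDFReal 0 1 := by
  funext x
  simp [gaussPdf, ProbabilityTheory.gaussianPDFReal]

theorem gaussPdf_pos (x : ℝ) : 0 < gaussPdf x :=
  gaussPdf_eq_gaussianPDFReal ▸ ProbabilityTheory.gaussianPDFReal_pos 0 1 x one_ne_zero

theorem integrable_gaussPdf : Integrable gaussPdf :=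
  gaussPdf_eq_gaussianPDFReal ▸ ProbabilityTheory.integrable_gaussianPDFReal 0 1

theorem log_gaussPdf (x : ℝ) : log (gaussPdf x) = -(x ^ 2 / 2) - log √(2 * π) := by
  rw [gaussPdf, log_mul (by positivity) (exp_ne_zero _), log_inv, log_exp]
  ring

theorem hasDerivAt_gaussPdf (x : ℝ) : HasDerivAt gaussPdf (-x * gaussPdf x) x := by
  have hexponent : HasDerivAt (fun z : ℝ ↦ -z ^ 2 / 2) (-x) x :=
    ((hasDerivAt_pow 2 x).fun_neg.div_const 2).congr_deriv (by push_cast; ring)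
  exact (hexponent.exp.const_mul (√(2 * π))⁻¹).congr_deriv (by rw [gaussPdf]; ring)

theorem tendsto_gaussPdf_atBot : Tendsto gaussPdf atBot (𝓝 0) := by
  have hexponent : Tendsto (fun x : ℝ ↦ -x ^ 2 / 2) atBot atBot :=
    (tendsto_neg_atTop_atBot.comp
      (tendsto_pow_atBot_of_even even_two two_ne_zero)).atBot_div_const two_pos
  exact mul_zero (√(2 * π))⁻¹ ▸ (tendsto_exp_atBot.comp hexponent).const_mul (√(2 * π))⁻¹

theorem hasDerivAt_Phi (x : ℝ) : HasDerivAt Phi (gaussPdf x) x :=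
  hasDerivAt_integral_Iic integrable_gaussPdf (hasDerivAt_gaussPdf x).continuousAt

theorem continuous_Phi : Continuous Phi :=
  continuous_iff_continuousAt.2 fun x ↦ (hasDerivAt_Phi x).continuousAt

theorem strictMono_Phi : StrictMono Phi :=
  strictMono_of_hasDerivAt_pos hasDerivAt_Phi gaussPdf_pos

theorem tendsto_Phi_atBot : Tendsto Phi atBot (𝓝 0) :=
  tendsto_integral_Iic_zero tendsto_id

theorem Phi_pos (x : ℝ) : 0 < Phi x :=
  lt_of_strictMono_of_tendsto_atBot strictMono_Phi tendsto_Phi_atBot x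

theorem hasDerivAt_gaussPdf_div_neg {x : ℝ} (hx : x ≠ 0) :
    HasDerivAt (fun z ↦ gaussPdf z / -z) (gaussPdf x * (1 + (x ^ 2)⁻¹)) x := by
  refine ((hasDerivAt_gaussPdf x).fun_div (hasDerivAt_neg x) (neg_ne_zero.2 hx)).congr_deriv ?_
  field_simp
  ring

theorem Phi_isEquivalent_gaussPdf_div_neg : Phi ~[atBot] fun x ↦ gaussPdf x / -x := by
  refine isEquivalent_atBot_of_hasDerivAt (.of_forall hasDerivAt_Phi)
    ((eventually_ne_atBot 0).mono fun _ ↦ hasDerivAt_gaussPdf_div_neg)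
    (.of_forall fun x ↦ ?_) tendsto_Phi_atBot
    (tendsto_gaussPdf_atBot.div_atTop tendsto_neg_atBot_atTop) ?_
  · have hpos := gaussPdf_pos x
    positivity
  · have hsq : Tendsto (fun x : ℝ ↦ (x ^ 2)⁻¹) atBot (𝓝 0) :=
      (tendsto_pow_atBot_of_even even_two two_ne_zero).inv_tendsto_atTop
    have hone : (fun x : ℝ ↦ 1 + (x ^ 2)⁻¹) ~[atBot] fun _ ↦ (1 : ℝ) :=
      (isEquivalent_const_iff_tendsto one_ne_zero).2 (by simpa using hsq.const_add 1)
    simpa [Pi.mul_def] using (IsEquivalent.refl (u := gaussPdf).mul hone).symm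

theorem isLittleO_log_neg_pow_two_atBot : (fun x : ℝ ↦ log (-x)) =o[atBot] fun x ↦ x ^ 2 := by
  simpa [Function.comp_def] using
    (isLittleO_log_rpow_atTop two_pos).comp_tendsto tendsto_neg_atBot_atTop

theorem log_neg_div_gaussPdf_isEquivalent :
    (fun x ↦ log (-x / gaussPdf x)) ~[atBot] fun x ↦ x ^ 2 / 2 := by
  have hsq : Tendsto (fun x : ℝ ↦ x ^ 2) atBot atTop :=
    tendsto_pow_atBot_of_even even_two two_ne_zero
  have hlower : (fun x : ℝ ↦ log (-x) + log √(2 * π)) =o[atBot] fun x ↦ x ^ 2 / 2 := by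
    have hadd : (fun x : ℝ ↦ log (-x) + log √(2 * π)) =o[atBot] fun x ↦ x ^ 2 :=
      isLittleO_log_neg_pow_two_atBot.add
        (isLittleO_const_left.2 (.inr (tendsto_norm_atTop_atTop.comp hsq)))
    simpa only [div_eq_inv_mul] using hadd.const_mul_right (inv_ne_zero two_ne_zero)
  refine (IsEquivalent.refl.add_isLittleO hlower).congr_left ?_
  filter_upwards [eventually_lt_atBot 0] with x hx
  rw [Pi.add_apply, log_div (neg_ne_zero.2 hx.ne) (gaussPdf_pos x).ne', log_gaussPdf]
  ring

theorem log_one_div_Phi_isEquivalent :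
    (fun x ↦ log (1 / Phi x)) ~[atBot] fun x ↦ x ^ 2 / 2 := by
  have hinv : (fun x ↦ 1 / Phi x) ~[atBot] fun x ↦ -x / gaussPdf x := by
    simpa [Pi.inv_def] using Phi_isEquivalent_gaussPdf_div_neg.inv
  have htop : Tendsto (fun x ↦ 1 / Phi x) atBot atTop := by
    simpa only [one_div, Pi.inv_def] using (tendsto_nhdsWithin_iff.2
      ⟨tendsto_Phi_atBot, .of_forall Phi_pos⟩).inv_tendsto_nhdsGT_zero
  exact (hinv.log (hinv.tendsto_atTop htop)).trans log_neg_div_gaussPdf_isEquivalent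

theorem sqrt_two_mul_log_one_div_Phi_isEquivalent :
    (fun x ↦ √(2 * log (1 / Phi x))) ~[atBot] fun x ↦ -x := by
  refine (isEquivalent_sqrt (IsEquivalent.refl.mul log_one_div_Phi_isEquivalent)).congr_right ?_
  filter_upwards [eventually_le_atBot 0] with x hx
  rw [Pi.mul_apply, mul_div_cancel₀ _ two_ne_zero, sqrt_sq_eq_abs, abs_of_nonpos hx]

theorem gaussPdf_isEquivalent_Phi_mul_sqrt_log :
    gaussPdf ~[atBot] fun x ↦ Phi x * √(2 * log (1 / Phi x)) := by
  refine ((Phi_isEquivalent_gaussPdf_div_neg.mul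
    sqrt_two_mul_log_one_div_Phi_isEquivalent).congr_right ?_).symm
  filter_upwards [eventually_lt_atBot 0] with x hx
  exact div_mul_cancel₀ _ (neg_ne_zero.2 hx.ne)

theorem eventually_Phi_PhiInv_eq : ∀ᶠ a in 𝓝[>] 0, Phi (PhiInv a) = a :=
  eventually_apply_invFun_eq strictMono_Phi continuous_Phi tendsto_Phi_atBot

theorem tendsto_PhiInv_nhdsGT_zero : Tendsto PhiInv (𝓝[>] 0) atBot :=
  tendsto_invFun_atBot strictMono_Phi continuous_Phi tendsto_Phi_atBot

theorem gaussI_isEquivalent : gaussI ~[𝓝[>] 0] fun a ↦ a * √(2 * log (1 / a)) := by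
  refine (gaussPdf_isEquivalent_Phi_mul_sqrt_log.comp_tendsto
    tendsto_PhiInv_nhdsGT_zero).congr_right ?_
  filter_upwards [eventually_Phi_PhiInv_eq] with a ha
  simp only [Function.comp_apply, ha]

/-- `I(a) ~ a·√(2·log(1/a))` as `a → 0⁺`. -/
theorem stmt2 :
    Tendsto (fun a : ℝ => gaussI a / (a * Real.sqrt (2 * Real.log (1 / a))))
      (nhdsWithin 0 (Set.Ioi 0)) (nhds 1) := by
  refine (isEquivalent_iff_tendsto_one ?_).1 gaussI_isEquivalent
  filter_upwards [Ioo_mem_nhdsGT one_pos] with a ha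
  have hlog : 0 < log (1 / a) := log_pos (one_lt_one_div ha.1 ha.2)
  have hpos : 0 < a := ha.1
  positivity
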